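/- arXiv:2211.12114 — 8 statements merged into one kernel-verified Lean document; each statement's English description precedes it below -/
import Mathlib

section
/- Let p be a prime, let v be an integer with 0 ≤ v ≤ p−1, let t ≥ 0 be a natural number, and let x be a positive integer divisible by p^t. Then |C(x+v, v) − 1 − H_v·x|_p ≤ p^{−2t}, where C(x+v, v) is the usual binomial coefficient viewed in ℚ and |·|_p is the p-adic absolute value on ℚ. -/
/-- A reciprocal of a positive integer below the prime `p` is a `p`-adic unit. -/
theorem padicNorm_one_div_natCast_of_lt (p : ℕ) [Fact p.Prime] {i : ℕ} (hi : 0 < i)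
    (hip : i < p) : padicNorm p (1 / (i : ℚ)) = 1 := by
  rw [padicNorm.div, padicNorm.one,
    (padicNorm.nat_eq_one_iff i).2 (Nat.not_dvd_of_pos_of_lt hi hip), div_one]

/-- The partial harmonic sums `H_v` with `v < p` are `p`-integral. -/
theorem padicNorm_sum_one_div_le_one (p : ℕ) [Fact p.Prime] {v : ℕ} (hv : v < p) :
    padicNorm p (∑ i ∈ Finset.Icc 1 v, (1 / (i : ℚ))) ≤ 1 := by
  refine padicNorm.sum_le' (fun i hi => ?_) zero_le_one
  rw [Finset.mem_Icc] at hi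
  exact (padicNorm_one_div_natCast_of_lt p hi.1 (by omega)).le

/-- `C(x+v+1, v+1) = C(x+v, v) (1 + x/(v+1))`. -/
theorem choose_add_succ_eq_mul (x v : ℕ) :
    ((x + (v + 1)).choose (v + 1) : ℚ) =
      ((x + v).choose v : ℚ) * (1 + 1 / ((v + 1 : ℕ) : ℚ) * x) := by
  have h : ((x + v + 1 : ℕ) : ℚ) * ((x + v).choose v : ℚ) =
      ((x + v + 1).choose (v + 1) : ℚ) * ((v + 1 : ℕ) : ℚ) :=
    mod_cast Nat.add_one_mul_choose_eq (x + v) v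
  have hv : ((v : ℚ) + 1) ≠ 0 := by positivity
  rw [← add_assoc]
  push_cast at h ⊢
  field_simp
  linear_combination -h

/-- Let `p` be a prime, `0 ≤ v ≤ p−1`, `t ≥ 0`, and let `x` be a positive integer divisible
by `p^t`. Then `|C(x+v, v) − 1 − H_v·x|_p ≤ p^{−2t}`, where `H_v = ∑_{i=1}^v 1/i` and
`|·|_p` is the `p`-adic absolute value on `ℚ` (with `|p|_p = 1/p`). -/
theorem zigzag_stmt_2 (p : ℕ) (hp : p.Prime) (v : ℕ) (hv : v ≤ p - 1)
    (t : ℕ) (x : ℕ) (hx : 0 < x) (hdvd : p ^ t ∣ x) :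
    padicNorm p (((x + v).choose v : ℚ) - 1 -
        (∑ i ∈ Finset.Icc 1 v, (1 / (i : ℚ))) * (x : ℚ)) ≤ (p : ℚ) ^ (-(2 * t : ℤ)) := by
  have : Fact p.Prime := ⟨hp⟩
  have hvp : v < p := by have := hp.pos; omega
  clear hv
  have hxx : padicNorm p ((x : ℚ) ^ 2) ≤ (p : ℚ) ^ (-(2 * t : ℤ)) := by
    have h : ((p ^ (2 * t) : ℕ) : ℤ) ∣ ((x ^ 2 : ℕ) : ℤ) := by
      rw [Int.natCast_dvd_natCast, mul_comm, pow_mul]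
      exact pow_dvd_pow_of_dvd hdvd 2
    simpa using padicNorm.dvd_iff_norm_le.1 h
  induction v with
  | zero => simp; positivity
  | succ v ih =>
    have hy := padicNorm_one_div_natCast_of_lt p v.succ_pos hvp
    have hH := padicNorm_sum_one_div_le_one p (v.lt_succ_self.trans hvp)
    have hE := ih (v.lt_succ_self.trans hvp)
    rw [Finset.sum_Icc_succ_top (by omega), choose_add_succ_eq_mul]
    set H := ∑ i ∈ Finset.Icc 1 v, (1 / (i : ℚ))
    set y : ℚ := 1 / ((v + 1 : ℕ) : ℚ)
    set c : ℚ := ((x + v).choose v : ℚ)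
    have hu : padicNorm p (1 + y * x) ≤ 1 := by
      refine padicNorm.nonarchimedean.trans (max_le padicNorm.one.le ?_)
      rw [padicNorm.mul, hy, one_mul]
      exact padicNorm.of_nat x
    rw [show c * (1 + y * x) - 1 - (H + y) * x =
      (c - 1 - H * x) * (1 + y * x) + H * y * (x : ℚ) ^ 2 by ring]
    refine padicNorm.nonarchimedean.trans (max_le ?_ ?_)
    · rw [padicNorm.mul]
      exact (mul_le_of_le_one_right (padicNorm.nonneg _) hu).trans hE
    · rw [padicNorm.mul, padicNorm.mul, hy, mul_one]
      exact (mul_le_of_le_one_left (padicNorm.nonneg _) hH).trans hxx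
end

section
/- Let p be a prime, let v₋, v₊ be integers with 0 ≤ v₋, v₊ ≤ p−1, let t ≥ 0 be a natural number, and let x be a positive integer divisible by p^t. Then |C(x+v₊, v₊)·C(x+v₋, v₋) − 1 − (H_{v₋} + H_{v₊})·x|_p ≤ p^{−2t}, where the binomial coefficients are viewed in ℚ and |·|_p is the p-adic absolute value on ℚ. -/
/-- Second order expansion of `C(x+v, v)` in `x`, with remainder in any subring of `ℚ` containing
`1 / i` for `1 ≤ i ≤ v`. -/
theorem exists_choose_eq_one_add_harmonic_mul_add (S : Subring ℚ) (x v : ℕ)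
    (hS : ∀ i ∈ Finset.Icc 1 v, 1 / (i : ℚ) ∈ S) :
    ∃ c ∈ S, ((x + v).choose v : ℚ) =
      1 + (∑ i ∈ Finset.Icc 1 v, 1 / (i : ℚ)) * x + c * (x : ℚ) ^ 2 := by
  induction v with
  | zero => exact ⟨0, S.zero_mem, by simp⟩
  | succ v ih =>
    have hS' : ∀ i ∈ Finset.Icc 1 v, 1 / (i : ℚ) ∈ S := fun i hi =>
      hS i (Finset.Icc_subset_Icc_right v.le_succ hi)
    obtain ⟨c, hc, hchoose⟩ := ih hS'
    have hH := S.sum_mem hS'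
    have hu := hS (v + 1) (by simp)
    rw [Finset.sum_Icc_succ_top (by omega)]
    set H := ∑ i ∈ Finset.Icc 1 v, 1 / (i : ℚ)
    set u : ℚ := 1 / ((v + 1 : ℕ) : ℚ) with hu_def
    refine ⟨c + H * u + c * u * x, S.add_mem (S.add_mem hc (S.mul_mem hH hu))
      (S.mul_mem (S.mul_mem hc hu) (natCast_mem S x)), ?_⟩
    have hv : ((v + 1 : ℕ) : ℚ) ≠ 0 := by positivity
    have hstep : ((x + (v + 1)).choose (v + 1) : ℚ) = (x + v).choose v * (1 + u * x) := by
      have h : ((x + v + 1 : ℕ) : ℚ) * (x + v).choose v =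
          (x + v + 1).choose (v + 1) * (v + 1 : ℕ) := by
        exact_mod_cast Nat.add_one_mul_choose_eq (x + v) v
      rw [← add_assoc, hu_def]
      field_simp
      rw [← h]
      push_cast
      ring
    rw [hstep, hchoose]
    ring

/-- The subring of rational numbers that are integral at `p`. -/
noncomputable def padicIntegralRat (p : ℕ) [Fact p.Prime] : Subring ℚ :=
  (PadicInt.subring p).comap (Rat.castHom ℚ_[p])

theorem mem_padicIntegralRat_iff {p : ℕ} [Fact p.Prime] {q : ℚ} :
    q ∈ padicIntegralRat p ↔ padicNorm p q ≤ 1 := by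
  have h : q ∈ padicIntegralRat p ↔ ‖(q : ℚ_[p])‖ ≤ 1 := Iff.rfl
  rw [h, Padic.eq_padicNorm]
  exact_mod_cast Iff.rfl

theorem one_div_mem_padicIntegralRat {p : ℕ} [Fact p.Prime] {v : ℕ} (hv : v ≤ p - 1) :
    ∀ i ∈ Finset.Icc 1 v, 1 / (i : ℚ) ∈ padicIntegralRat p := by
  intro i hi
  rw [Finset.mem_Icc] at hi
  have hpi : ¬ p ∣ i := fun h => by
    have := Nat.le_of_dvd (by omega) h
    omega
  rw [mem_padicIntegralRat_iff, padicNorm.div, (padicNorm.nat_eq_one_iff i).2 hpi]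
  simp


/-- Let `p` be a prime, `0 ≤ v₋, v₊ ≤ p−1`, `t ≥ 0`, and let `x` be a positive integer
divisible by `p^t`. Then `|C(x+v₊, v₊)·C(x+v₋, v₋) − 1 − (H_{v₋} + H_{v₊})·x|_p ≤ p^{−2t}`,
where `H_v = ∑_{i=1}^v 1/i` and `|·|_p` is the `p`-adic absolute value (with `|p|_p = 1/p`). -/
theorem zigzag_stmt_3 (p : ℕ) (hp : p.Prime) (vminus vplus : ℕ)
    (hvminus : vminus ≤ p - 1) (hvplus : vplus ≤ p - 1)
    (t : ℕ) (x : ℕ) (hx : 0 < x) (hdvd : p ^ t ∣ x) :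
    padicNorm p (((x + vplus).choose vplus : ℚ) * ((x + vminus).choose vminus : ℚ) - 1 -
        ((∑ i ∈ Finset.Icc 1 vminus, (1 / (i : ℚ))) +
          ∑ i ∈ Finset.Icc 1 vplus, (1 / (i : ℚ))) * (x : ℚ)) ≤ (p : ℚ) ^ (-(2 * t : ℤ)) := by
  have : Fact p.Prime := ⟨hp⟩
  have hminus := one_div_mem_padicIntegralRat hvminus
  have hplus := one_div_mem_padicIntegralRat hvplus
  obtain ⟨c, hc, hc_eq⟩ := exists_choose_eq_one_add_harmonic_mul_add _ x vminus hminus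
  obtain ⟨d, hd, hd_eq⟩ := exists_choose_eq_one_add_harmonic_mul_add _ x vplus hplus
  have ha := Subring.sum_mem _ hminus
  have hb := Subring.sum_mem _ hplus
  rw [hc_eq, hd_eq]
  set a := ∑ i ∈ Finset.Icc 1 vminus, 1 / (i : ℚ)
  set b := ∑ i ∈ Finset.Icc 1 vplus, 1 / (i : ℚ)
  have hx_mem : (x : ℚ) ∈ padicIntegralRat p := natCast_mem _ x
  have hrem : a * b + c + d + (a * d + b * c) * x + c * d * (x : ℚ) ^ 2 ∈ padicIntegralRat p :=
    add_mem (add_mem (add_mem (add_mem (mul_mem ha hb) hc) hd)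
      (mul_mem (add_mem (mul_mem ha hd) (mul_mem hb hc)) hx_mem))
      (mul_mem (mul_mem hc hd) (pow_mem hx_mem 2))
  have hx_sq : padicNorm p ((x : ℚ) ^ 2) ≤ (p : ℚ) ^ (-(2 * t : ℤ)) := by
    have hdvd_sq : ((p ^ (2 * t) : ℕ) : ℤ) ∣ ((x ^ 2 : ℕ) : ℤ) := by
      rw [Int.natCast_dvd_natCast, mul_comm, pow_mul]
      exact pow_dvd_pow_of_dvd hdvd 2
    simpa using padicNorm.dvd_iff_norm_le.1 hdvd_sq
  calc _ = padicNorm p ((a * b + c + d + (a * d + b * c) * x + c * d * (x : ℚ) ^ 2) *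
        (x : ℚ) ^ 2) := by ring_nf
    _ ≤ 1 * (p : ℚ) ^ (-(2 * t : ℤ)) := by
      rw [padicNorm.mul]
      exact mul_le_mul (mem_padicIntegralRat_iff.1 hrem) hx_sq (padicNorm.nonneg _) zero_le_one
    _ = _ := one_mul _
end

section
/- Let p be a prime and let K be a characteristic-zero field with a multiplicative nonarchimedean norm ‖·‖ such that ‖q‖ equals the p-adic absolute value of q for every rational number q (viewed in K). Let k₀ be an integer, let (k_n) be a sequence of integers with k_n > k₀ for all n and v_p(k_n − k₀) → ∞. Let α, α' ∈ K with α ≠ 0, let C ≥ 0 be a real constant, and let (a_n), (y_n) be sequences in K such that for all n: ‖a_n − α − α'·(k_n − k₀)‖ ≤ C·‖(k_n − k₀ : K)‖², y_n² − a_n·y_n + p^{k_n − 1} = 0, and ‖y_n‖ = ‖a_n‖. Then (y_n − α)/(k_n − k₀) → α' in K. -/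
/-- A positive integer is at least twice its `p`-adic valuation. -/
lemma two_mul_padicValInt_le {p : ℕ} (hp : p.Prime) {d : ℤ} (hd : 0 < d) :
    2 * (padicValInt p d : ℤ) ≤ d := by
  have hdvd : ((p ^ padicValInt p d : ℕ) : ℤ) ∣ d := by
    exact_mod_cast padicValInt_dvd d
  have hpow : 2 ^ padicValInt p d ≤ p ^ padicValInt p d :=
    Nat.pow_le_pow_left hp.two_le _
  have htwo : ∀ v : ℕ, 2 * v ≤ 2 ^ v
    | 0 => by norm_num
    | v + 1 => by
      have := v.lt_two_pow_self
      rw [pow_succ]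
      omega
  have := Int.le_of_dvd hd hdvd
  have := htwo (padicValInt p d)
  omega

/-- If the norm on `K` restricts to the `p`-adic absolute value on `ℚ`, then the norm of an
integer `d ≠ 0` is `p ^ (-v_p(d))`. -/
lemma norm_intCast_eq_zpow_neg_padicValInt {p : ℕ} {K : Type*} [NormedField K]
    (hcompat : ∀ q : ℚ, ‖(q : K)‖ = ((padicNorm p q : ℚ) : ℝ)) {d : ℤ} (hd : d ≠ 0) :
    ‖(d : K)‖ = (p : ℝ) ^ (-(padicValInt p d : ℤ)) := by
  have h := hcompat (d : ℚ)
  rw [padicNorm.eq_zpow_of_nonzero (by exact_mod_cast hd), padicValRat.of_int] at h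
  simpa using h

/-- Differentiability of the unit root: let `p` be a prime and `K` a characteristic-zero
field with a multiplicative nonarchimedean norm restricting to the `p`-adic absolute value
on `ℚ`. Let `kₙ > k₀` be integers with `v_p(kₙ − k₀) → ∞`, let `α ≠ 0`, and suppose
`‖aₙ − α − α'(kₙ − k₀)‖ ≤ C‖kₙ − k₀‖²`, `yₙ² − aₙyₙ + p^{kₙ−1} = 0` and `‖yₙ‖ = ‖aₙ‖`
for all `n`. Then `(yₙ − α)/(kₙ − k₀) → α'`. -/
theorem zigzag_stmt_6 (p : ℕ) (hp : p.Prime)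
    {K : Type*} [NormedField K] [CharZero K] [IsUltrametricDist K]
    (hcompat : ∀ q : ℚ, ‖(q : K)‖ = ((padicNorm p q : ℚ) : ℝ))
    (k₀ : ℤ) (k : ℕ → ℤ) (hk : ∀ n, k₀ < k n)
    (hval : Filter.Tendsto (fun n => padicValInt p (k n - k₀)) Filter.atTop Filter.atTop)
    (α α' : K) (hα : α ≠ 0) (C : ℝ) (hC : 0 ≤ C)
    (a y : ℕ → K)
    (hTaylor : ∀ n, ‖a n - α - α' * ((k n - k₀ : ℤ) : K)‖ ≤ C * ‖((k n - k₀ : ℤ) : K)‖ ^ 2)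
    (heq : ∀ n, (y n) ^ 2 - a n * y n + (p : K) ^ (k n - 1) = 0)
    (hnorm : ∀ n, ‖y n‖ = ‖a n‖) :
    Filter.Tendsto (fun n => (y n - α) / ((k n - k₀ : ℤ) : K)) Filter.atTop (nhds α') := by
  have : Fact p.Prime := ⟨hp⟩
  have hp1 : (1 : ℝ) < p := by exact_mod_cast hp.one_lt
  have hp0 : (p : ℝ) ≠ 0 := by positivity
  have hd : ∀ n, 0 < k n - k₀ := fun n => sub_pos.2 (hk n)
  have hnormd : ∀ n, ‖((k n - k₀ : ℤ) : K)‖ = (p : ℝ) ^ (-(padicValInt p (k n - k₀) : ℤ)) :=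
    fun n => norm_intCast_eq_zpow_neg_padicValInt hcompat (hd n).ne'
  have hnormp : ‖(p : K)‖ = (p : ℝ)⁻¹ := by
    have h := hcompat (p : ℚ)
    rw [padicNorm.padicNorm_p hp.one_lt] at h
    simpa using h
  have hnormd0 : Filter.Tendsto (fun n => ‖((k n - k₀ : ℤ) : K)‖) Filter.atTop (nhds 0) := by
    have h := (tendsto_pow_atTop_nhds_zero_of_lt_one (inv_nonneg.2 (zero_le_one.trans hp1.le))
      (inv_lt_one_of_one_lt₀ hp1)).comp hval
    refine h.congr fun n => ?_
    rw [hnormd, Function.comp_apply, zpow_neg, zpow_natCast, inv_pow]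
  have hd0 : Filter.Tendsto (fun n => ((k n - k₀ : ℤ) : K)) Filter.atTop (nhds 0) :=
    tendsto_zero_iff_norm_tendsto_zero.2 hnormd0
  have ha : Filter.Tendsto a Filter.atTop (nhds α) := by
    have h1 : Filter.Tendsto (fun n => a n - α - α' * ((k n - k₀ : ℤ) : K))
        Filter.atTop (nhds 0) :=
      squeeze_zero_norm hTaylor (by simpa using (hnormd0.pow 2).const_mul C)
    simpa using (h1.add (hd0.const_mul α')).add_const α
  have hy : Filter.Tendsto (fun n => ‖y n‖) Filter.atTop (nhds ‖α‖) := by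
    simpa only [hnorm] using ha.norm
  have hα' : ‖α‖ ≠ 0 := norm_ne_zero_iff.2 hα
  have hpow : ∀ n, ‖(p : K) ^ (k n - 1)‖ ≤
      (p : ℝ) ^ (1 - k₀) * ‖((k n - k₀ : ℤ) : K)‖ ^ 2 := by
    intro n
    rw [norm_zpow, hnormp, hnormd, inv_zpow', ← zpow_natCast, ← zpow_mul, ← zpow_add₀ hp0]
    refine zpow_le_zpow_right₀ hp1.le ?_
    have := two_mul_padicValInt_le hp (hd n)
    push_cast
    linarith
  rw [tendsto_iff_norm_sub_tendsto_zero]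
  have hlim : Filter.Tendsto
      (fun n => ‖((k n - k₀ : ℤ) : K)‖ * (C + (p : ℝ) ^ (1 - k₀) / ‖y n‖))
      Filter.atTop (nhds 0) := by
    simpa using hnormd0.mul
      (((tendsto_const_nhds (x := (p : ℝ) ^ (1 - k₀))).div hy hα').const_add C)
  refine squeeze_zero' (Filter.Eventually.of_forall fun n => norm_nonneg _) ?_ hlim
  filter_upwards [hy.eventually_ne hα'] with n hyn
  have hyn' : y n ≠ 0 := norm_ne_zero_iff.1 hyn
  have hdn : ((k n - k₀ : ℤ) : K) ≠ 0 := by exact_mod_cast (hd n).ne'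
  have hypos : 0 < ‖y n‖ := norm_pos_iff.2 hyn'
  have hE := heq n
  have hT := hTaylor n
  have hP := hpow n
  generalize ((k n - k₀ : ℤ) : K) = d at *
  generalize (p : K) ^ (k n - 1) = P at *
  have hdpos : 0 < ‖d‖ := norm_pos_iff.2 hdn
  have hsplit : (y n - α) / d - α' = (a n - α - α' * d) / d - P / (y n * d) := by
    field_simp
    linear_combination hE
  rw [hsplit]
  calc ‖(a n - α - α' * d) / d - P / (y n * d)‖
      ≤ ‖a n - α - α' * d‖ / ‖d‖ + ‖P‖ / (‖y n‖ * ‖d‖) := by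
        simpa only [norm_div, norm_mul] using norm_sub_le ((a n - α - α' * d) / d) (P / (y n * d))
    _ ≤ C * ‖d‖ ^ 2 / ‖d‖ + (p : ℝ) ^ (1 - k₀) * ‖d‖ ^ 2 / (‖y n‖ * ‖d‖) := by gcongr
    _ = ‖d‖ * (C + (p : ℝ) ^ (1 - k₀) / ‖y n‖) := by field_simp
end

section
/- Let p be a prime and let K be a characteristic-zero field with a multiplicative nonarchimedean norm ‖·‖ such that ‖q‖ equals the p-adic absolute value of q for every rational number q (viewed in K). Let k₀ be an integer, let (k_n) be a sequence of integers with k_n > k₀ for all n and v_p(k_n − k₀) → ∞. Let α, α' ∈ K with α ≠ 0, let C ≥ 0 be a real constant, and let (a_n), (y_n) be sequences in K such that for all n: ‖a_n − α − α'·(k_n − k₀)‖ ≤ C·‖(k_n − k₀ : K)‖², y_n² − a_n·y_n + p^{k_n − 1} = 0, and ‖y_n‖ = ‖a_n‖. Then (y_n² − α²)/(k_n − k₀) → 2·α·α' in K. -/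
open Filter Topology

/-- If `y` is a root of `Y² - aY + e` with `e ≠ 0` and `‖y‖ = ‖a‖`, then `y²` is close to `a²`. -/
lemma norm_sq_sub_sq_le_of_quadratic_root {K : Type*} [NormedField K] {a y e : K} (he : e ≠ 0)
    (heq : y ^ 2 - a * y + e = 0) (hnorm : ‖y‖ = ‖a‖) : ‖y ^ 2 - a ^ 2‖ ≤ 2 * ‖e‖ := by
  have hy : y ≠ 0 := by
    rintro rfl
    simp at heq
    exact he heq
  have hy' : 0 < ‖y‖ := norm_pos_iff.2 hy
  have h : y * (y ^ 2 - a ^ 2) = -(e * (y + a)) := by linear_combination (y + a) * heq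
  have h' : ‖y‖ * ‖y ^ 2 - a ^ 2‖ = ‖e‖ * ‖y + a‖ := by
    rw [← norm_mul, h, norm_neg, norm_mul]
  have hadd : ‖y + a‖ ≤ 2 * ‖y‖ := by linarith [norm_add_le y a]
  refine le_of_mul_le_mul_left ?_ hy'
  nlinarith [mul_le_mul_of_nonneg_left hadd (norm_nonneg e)]

/-- If `aₙ = α + α' dₙ + O(dₙ²)` with `dₙ → 0`, then `(aₙ² - α²) / dₙ → 2αα'`. -/
lemma tendsto_sq_sub_sq_div_of_taylor {K : Type*} [NormedField K] {α α' : K} {C : ℝ}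
    {a d : ℕ → K} (hd : ∀ n, d n ≠ 0) (hd0 : Tendsto d atTop (𝓝 0))
    (hTaylor : ∀ n, ‖a n - α - α' * d n‖ ≤ C * ‖d n‖ ^ 2) :
    Tendsto (fun n => (a n ^ 2 - α ^ 2) / d n) atTop (𝓝 (2 * α * α')) := by
  have hquot : Tendsto (fun n => (a n - α) / d n) atTop (𝓝 α') := by
    rw [tendsto_iff_norm_sub_tendsto_zero]
    refine squeeze_zero (fun n => norm_nonneg _) (fun n => ?_)
      (by simpa using hd0.norm.const_mul C)
    have hpos : 0 < ‖d n‖ := norm_pos_iff.2 (hd n)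
    have : (a n - α) / d n - α' = (a n - α - α' * d n) / d n := by
      field_simp [hd n]
    rw [this, norm_div, div_le_iff₀ hpos]
    linarith [hTaylor n]
  have ha : Tendsto (fun n => a n + α) atTop (𝓝 (α + α)) := by
    have h := ((hquot.mul hd0).add_const α).add_const α
    simp only [mul_zero, zero_add, div_mul_cancel₀ _ (hd _), sub_add_cancel] at h
    exact h
  convert hquot.mul ha using 2 <;> ring

/-- The norm of a nonzero integer, for a norm extending the `p`-adic absolute value. -/
lemma norm_intCast_eq_inv_pow_padicValInt {p : ℕ} {K : Type*} [NormedField K] [CharZero K]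
    (hcompat : ∀ q : ℚ, ‖(q : K)‖ = ((padicNorm p q : ℚ) : ℝ)) {m : ℤ} (hm : m ≠ 0) :
    ‖(m : K)‖ = ((p : ℝ)⁻¹) ^ padicValInt p m := by
  have h := hcompat m
  rw [padicNorm.eq_zpow_of_nonzero (by exact_mod_cast hm), padicValRat.of_int] at h
  simpa using h

/-- The norm of `p`, for a norm extending the `p`-adic absolute value. -/
lemma norm_natCast_prime_eq_inv {p : ℕ} (hp : p.Prime) {K : Type*} [NormedField K] [CharZero K]
    (hcompat : ∀ q : ℚ, ‖(q : K)‖ = ((padicNorm p q : ℚ) : ℝ)) : ‖(p : K)‖ = (p : ℝ)⁻¹ := by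
  have h := hcompat p
  rw [padicNorm.padicNorm_p hp.one_lt] at h
  simpa using h

/-- Convergence of the third blow-up coordinate: with the hypotheses of the previous
statement (prime `p`, characteristic-zero field `K` with multiplicative nonarchimedean
norm restricting to the `p`-adic absolute value on `ℚ`, integers `kₙ > k₀` with
`v_p(kₙ − k₀) → ∞`, `α ≠ 0`, `‖aₙ − α − α'(kₙ − k₀)‖ ≤ C‖kₙ − k₀‖²`,
`yₙ² − aₙyₙ + p^{kₙ−1} = 0` and `‖yₙ‖ = ‖aₙ‖`), one has
`(yₙ² − α²)/(kₙ − k₀) → 2αα'`. -/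
theorem zigzag_stmt_7 (p : ℕ) (hp : p.Prime)
    {K : Type*} [NormedField K] [CharZero K] [IsUltrametricDist K]
    (hcompat : ∀ q : ℚ, ‖(q : K)‖ = ((padicNorm p q : ℚ) : ℝ))
    (k₀ : ℤ) (k : ℕ → ℤ) (hk : ∀ n, k₀ < k n)
    (hval : Filter.Tendsto (fun n => padicValInt p (k n - k₀)) Filter.atTop Filter.atTop)
    (α α' : K) (hα : α ≠ 0) (C : ℝ) (hC : 0 ≤ C)
    (a y : ℕ → K)
    (hTaylor : ∀ n, ‖a n - α - α' * ((k n - k₀ : ℤ) : K)‖ ≤ C * ‖((k n - k₀ : ℤ) : K)‖ ^ 2)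
    (heq : ∀ n, (y n) ^ 2 - a n * y n + (p : K) ^ (k n - 1) = 0)
    (hnorm : ∀ n, ‖y n‖ = ‖a n‖) :
    Filter.Tendsto (fun n => ((y n) ^ 2 - α ^ 2) / ((k n - k₀ : ℤ) : K)) Filter.atTop
      (nhds (2 * α * α')) := by
  have hp1 : (1 : ℝ) < p := by exact_mod_cast hp.one_lt
  have hp0 : (0 : ℝ) < p := by linarith
  have hpK : (p : K) ≠ 0 := by exact_mod_cast hp.ne_zero
  have hr1 : (p : ℝ)⁻¹ < 1 := inv_lt_one_of_one_lt₀ hp1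
  have hm : ∀ n, k n - k₀ ≠ 0 := fun n => by have := hk n; lia
  have hd : ∀ n, ((k n - k₀ : ℤ) : K) ≠ 0 := fun n => by exact_mod_cast hm n
  have hdnorm := fun n => norm_intCast_eq_inv_pow_padicValInt hcompat (hm n)
  have hd0 : Tendsto (fun n => ((k n - k₀ : ℤ) : K)) atTop (𝓝 0) := by
    rw [tendsto_zero_iff_norm_tendsto_zero]
    simp only [hdnorm]
    exact (tendsto_pow_atTop_nhds_zero_of_lt_one (by positivity) hr1).comp hval
  have hpow : ∀ n, p ^ padicValInt p (k n - k₀) ≤ (k n - k₀).natAbs := fun n =>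
    Nat.le_of_dvd (Int.natAbs_pos.2 (hm n)) pow_padicValNat_dvd
  have hD : Tendsto (fun n => (k n - k₀).natAbs) atTop atTop :=
    tendsto_atTop_mono (fun n => (Nat.lt_pow_self hp.one_lt).le.trans (hpow n)) hval
  have herr : Tendsto (fun n => ((y n) ^ 2 - a n ^ 2) / ((k n - k₀ : ℤ) : K)) atTop (𝓝 0) := by
    have hlim : Tendsto (fun n => 2 * ((p : ℝ)⁻¹) ^ (k₀ - 1) *
        (((k n - k₀).natAbs : ℝ) * ((p : ℝ)⁻¹) ^ (k n - k₀).natAbs)) atTop (𝓝 0) := by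
      simpa using ((tendsto_self_mul_const_pow_of_lt_one (by positivity) hr1).comp hD).const_mul
        (2 * ((p : ℝ)⁻¹) ^ (k₀ - 1))
    refine squeeze_zero_norm (fun n => ?_) hlim
    have hroot := norm_sq_sub_sq_le_of_quadratic_root (zpow_ne_zero _ hpK) (heq n) (hnorm n)
    have hexp : k n - 1 = (k₀ - 1) + ((k n - k₀).natAbs : ℤ) := by have := hk n; lia
    rw [norm_zpow, norm_natCast_prime_eq_inv hp hcompat, hexp,
      zpow_add₀ (inv_ne_zero hp0.ne'), zpow_natCast] at hroot
    have hinv : ‖((k n - k₀ : ℤ) : K)‖⁻¹ ≤ ((k n - k₀).natAbs : ℝ) := by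
      rw [hdnorm, inv_pow, inv_inv]
      exact_mod_cast hpow n
    rw [norm_div, div_eq_mul_inv]
    calc _ ≤ _ := mul_le_mul hroot hinv (by positivity) (by positivity)
      _ = _ := by ring
  have hmain := herr.add (tendsto_sq_sub_sq_div_of_taylor hd hd0 hTaylor)
  rw [zero_add] at hmain
  refine hmain.congr fun n => ?_
  rw [← add_div, sub_add_sub_cancel]
end

section
/- Let p be an odd prime. The series ∑_{j=1}^{∞} (−1)^{j+1}·p^j/j converges in ℚ_p; call its sum ℒ. Then for every integer k₀ ≥ 1 and every sequence of integers (k_n) with k_n > k₀ for all n and v_p(k_n − k₀) → ∞, one has ((1+p)^{k_n − 1} − (1+p)^{k₀ − 1})/(k_n − k₀) → (1+p)^{k₀ − 1}·ℒ in ℚ_p. -/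
open Filter Topology

namespace Padic

variable {p : ℕ} [Fact p.Prime]

/-- The archimedean absolute value bounds the inverse of the `p`-adic one. -/
theorem norm_natCast_inv_le (n : ℕ) : ‖((n : ℚ_[p]))⁻¹‖ ≤ n := by
  rcases eq_or_ne n 0 with rfl | hn
  · simp
  have hp : (p : ℝ) ≠ 0 := by exact_mod_cast (Fact.out : p.Prime).ne_zero
  rw [norm_inv, norm_eq_zpow_neg_valuation (by exact_mod_cast hn), valuation_natCast,
    zpow_neg, inv_inv, zpow_natCast]
  exact_mod_cast Nat.le_of_dvd (Nat.pos_of_ne_zero hn) pow_padicValNat_dvd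

theorem norm_natCast_le_one (n : ℕ) : ‖(n : ℚ_[p])‖ ≤ 1 := by
  simpa using norm_int_le_one (p := p) n

theorem norm_pow_div_le (i : ℕ) :
    ‖(p : ℚ_[p]) ^ (i + 1) / ((i + 1 : ℕ) : ℚ_[p])‖ ≤
      ((i + 1 : ℕ) : ℝ) * ((p : ℝ)⁻¹) ^ (i + 1) := by
  rw [div_eq_mul_inv, norm_mul, norm_pow, norm_p, mul_comm]
  gcongr
  exact norm_natCast_inv_le _

theorem summable_mul_inv_pow :
    Summable fun i : ℕ => ((i + 1 : ℕ) : ℝ) * ((p : ℝ)⁻¹) ^ (i + 1) := by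
  have hp : ‖(p : ℝ)⁻¹‖ < 1 := by
    rw [norm_inv, Real.norm_natCast]
    exact inv_lt_one_of_one_lt₀ (by exact_mod_cast (Fact.out : p.Prime).one_lt)
  have h := summable_pow_mul_geometric_of_norm_lt_one 1 hp
  simpa using (summable_nat_add_iff 1).2 h

/-- The Mercator series of `log (1 + p)`, indexed from `0`, is summable. -/
theorem summable_log_one_add_p :
    Summable fun i : ℕ => (-1 : ℚ_[p]) ^ i * ((p : ℚ_[p]) ^ (i + 1) / ((i + 1 : ℕ) : ℚ_[p])) := by
  refine Summable.of_norm_bounded (summable_mul_inv_pow (p := p)) fun i => ?_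
  simpa [norm_mul] using norm_pow_div_le (p := p) i

/-- As `m → 0` in `ℚ_p`, `(m - 1).choose i → (-1).choose i = (-1) ^ i`. -/
theorem tendsto_choose_sub_one {α : Type*} {l : Filter α} {m : α → ℕ} (hm : ∀ a, m a ≠ 0)
    (h : Tendsto (fun a => (m a : ℚ_[p])) l (𝓝 0)) (i : ℕ) :
    Tendsto (fun a => ((m a - 1).choose i : ℚ_[p])) l (𝓝 ((-1) ^ i)) := by
  induction i with
  | zero => simpa using tendsto_const_nhds
  | succ i ih =>
    have key : ∀ a, (((m a - 1).choose (i + 1) : ℕ) : ℚ_[p]) =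
        m a * ((m a - 1).choose i : ℚ_[p]) / ((i + 1 : ℕ) : ℚ_[p])
          - ((m a - 1).choose i : ℚ_[p]) := by
      intro a
      obtain ⟨n, hn⟩ := Nat.exists_eq_succ_of_ne_zero (hm a)
      have hi : ((i + 1 : ℕ) : ℚ_[p]) ≠ 0 := by exact_mod_cast i.succ_ne_zero
      have e₁ := congrArg (Nat.cast (R := ℚ_[p])) (Nat.add_one_mul_choose_eq n i)
      have e₂ := congrArg (Nat.cast (R := ℚ_[p])) (Nat.choose_succ_succ n i)
      rw [hn, Nat.succ_sub_one, eq_sub_iff_add_eq, eq_div_iff hi]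
      push_cast at e₁ e₂ ⊢
      rw [e₁, e₂]
      ring
    simp_rw [key]
    simpa [pow_succ] using ((h.mul ih).div_const ((i + 1 : ℕ) : ℚ_[p])).sub ih

theorem one_add_pow_sub_one_div (x : ℚ_[p]) {m : ℕ} (hm : m ≠ 0) :
    ((1 + x) ^ m - 1) / m =
      ∑' i : ℕ, ((m - 1).choose i : ℚ_[p]) * (x ^ (i + 1) / ((i + 1 : ℕ) : ℚ_[p])) := by
  obtain ⟨n, rfl⟩ := Nat.exists_eq_succ_of_ne_zero hm
  rw [tsum_eq_sum (s := Finset.range (n + 1)) fun i hi => by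
    rw [Nat.succ_sub_one, Nat.choose_eq_zero_of_lt (by simpa using hi)]; simp]
  have hn : ((n + 1 : ℕ) : ℚ_[p]) ≠ 0 := by exact_mod_cast n.succ_ne_zero
  rw [Nat.succ_eq_add_one, div_eq_iff hn, add_comm 1 x, add_pow, Finset.sum_range_succ']
  simp only [one_pow, mul_one, pow_zero, Nat.choose_zero_right, Nat.cast_one,
    add_sub_cancel_right, Finset.sum_mul, Nat.add_sub_cancel]
  refine Finset.sum_congr rfl fun i _ => ?_
  have hi : ((i + 1 : ℕ) : ℚ_[p]) ≠ 0 := by exact_mod_cast i.succ_ne_zero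
  have e := congrArg (Nat.cast (R := ℚ_[p])) (Nat.add_one_mul_choose_eq n i)
  rw [Nat.cast_mul, Nat.cast_mul] at e
  rw [mul_div_assoc', div_mul_eq_mul_div, eq_div_iff hi]
  linear_combination (-x ^ (i + 1)) * e

/-- The difference quotient of `m ↦ (1 + p) ^ m` at `0` tends to `log (1 + p)`. -/
theorem tendsto_one_add_p_pow_sub_one_div {α : Type*} {l : Filter α} {m : α → ℕ}
    (hm : ∀ a, m a ≠ 0) (h : Tendsto (fun a => (m a : ℚ_[p])) l (𝓝 0)) :
    Tendsto (fun a => ((1 + p : ℚ_[p]) ^ m a - 1) / m a) l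
      (𝓝 (∑' i : ℕ, (-1 : ℚ_[p]) ^ i * ((p : ℚ_[p]) ^ (i + 1) / ((i + 1 : ℕ) : ℚ_[p])))) := by
  simp_rw [fun a => one_add_pow_sub_one_div (p : ℚ_[p]) (hm a)]
  refine tendsto_tsum_of_dominated_convergence (summable_mul_inv_pow (p := p))
    (fun i => (tendsto_choose_sub_one hm h i).mul_const _) (Eventually.of_forall fun a i => ?_)
  rw [norm_mul]
  exact (mul_le_of_le_one_left (norm_nonneg _) (norm_natCast_le_one _)).trans (norm_pow_div_le i)

theorem tendsto_intCast_zero_of_padicValInt {α : Type*} {l : Filter α} {z : α → ℤ}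
    (hz : ∀ a, z a ≠ 0) (h : Tendsto (fun a => padicValInt p (z a)) l atTop) :
    Tendsto (fun a => (z a : ℚ_[p])) l (𝓝 0) := by
  have hp : (p : ℝ)⁻¹ < 1 :=
    inv_lt_one_of_one_lt₀ (by exact_mod_cast (Fact.out : p.Prime).one_lt)
  rw [tendsto_zero_iff_norm_tendsto_zero]
  refine ((tendsto_pow_atTop_nhds_zero_of_lt_one (by positivity) hp).comp h).congr fun a => ?_
  rw [norm_eq_zpow_neg_valuation (by exact_mod_cast hz a), valuation_intCast, zpow_neg,
    zpow_natCast, Function.comp_apply, inv_pow]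

end Padic

/-- Let `p` be an odd prime. The series `∑_{j≥1} (−1)^{j+1} p^j / j` converges in `ℚ_p`,
with sum `ℒ = log(1+p)`, and for every integer `k₀ ≥ 1` and every sequence of integers
`kₙ > k₀` with `v_p(kₙ − k₀) → ∞`, one has
`((1+p)^{kₙ−1} − (1+p)^{k₀−1})/(kₙ − k₀) → (1+p)^{k₀−1}·ℒ` in `ℚ_p`. -/
theorem zigzag_stmt_8 (p : ℕ) [Fact p.Prime] (hodd : Odd p) :
    ∃ L : ℚ_[p],
      Filter.Tendsto
        (fun N : ℕ => ∑ j ∈ Finset.Icc 1 N, ((-1 : ℚ_[p]) ^ (j + 1) * (p : ℚ_[p]) ^ j / (j : ℚ_[p])))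
        Filter.atTop (nhds L) ∧
      ∀ k₀ : ℤ, 1 ≤ k₀ → ∀ k : ℕ → ℤ, (∀ n, k₀ < k n) →
        Filter.Tendsto (fun n => padicValInt p (k n - k₀)) Filter.atTop Filter.atTop →
        Filter.Tendsto
          (fun n => ((1 + p : ℚ_[p]) ^ (k n - 1) - (1 + p : ℚ_[p]) ^ (k₀ - 1)) /
            ((k n - k₀ : ℤ) : ℚ_[p]))
          Filter.atTop (nhds ((1 + p : ℚ_[p]) ^ (k₀ - 1) * L)) := by
  refine ⟨∑' i : ℕ, (-1 : ℚ_[p]) ^ i * ((p : ℚ_[p]) ^ (i + 1) / ((i + 1 : ℕ) : ℚ_[p])),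
    ?_, fun k₀ _ k hk hv => ?_⟩
  · refine Padic.summable_log_one_add_p.hasSum.tendsto_sum_nat.congr fun N => ?_
    induction N with
    | zero => simp
    | succ N ih =>
      rw [Finset.sum_range_succ, Finset.sum_Icc_succ_top (by omega), ih]
      ring
  · have hpos : ∀ n, 0 < k n - k₀ := fun n => sub_pos.2 (hk n)
    have hcast : ∀ n, (((k n - k₀).toNat : ℕ) : ℤ) = k n - k₀ := fun n =>
      Int.toNat_of_nonneg (hpos n).le
    have hcast' : ∀ n, (((k n - k₀).toNat : ℕ) : ℚ_[p]) = ((k n - k₀ : ℤ) : ℚ_[p]) := fun n => by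
      rw [← Int.cast_natCast, hcast]
    have hlim := Padic.tendsto_intCast_zero_of_padicValInt (fun n => (hpos n).ne') hv
    have hp : (1 + p : ℚ_[p]) ≠ 0 := by exact_mod_cast (by omega : 1 + p ≠ 0)
    refine ((Padic.tendsto_one_add_p_pow_sub_one_div (m := fun n => (k n - k₀).toNat)
      (fun n => by have := hpos n; omega) (by simpa only [hcast'] using hlim)).const_mul
        ((1 + p : ℚ_[p]) ^ (k₀ - 1))).congr fun n => ?_
    rw [hcast', ← zpow_natCast, hcast, mul_div_assoc', mul_sub, mul_one, ← zpow_add₀ hp]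
    congr 3
    ring
end

section
/- Let p be an odd prime and let K be a characteristic-zero field with a multiplicative nonarchimedean norm ‖·‖ such that ‖q‖ equals the p-adic absolute value of q for every rational number q (viewed in K). Let r₀ ≥ 1 be an integer and let s ∈ K satisfy s² = p^{r₀}. Let L, H, h, e₁, e₂ ∈ K with h ≠ 0, L ≠ H, ‖H‖ ≤ 1, ‖e₁‖ ≤ ‖h‖², ‖e₂‖ ≤ ‖h‖², and max(1, ‖L‖)²·‖h‖ < ‖L − H‖. Set a = s·(1 + (L/2)·h + e₁) and B = 1 + H·h + e₂. Then ‖(a² − B·p^{r₀})/(p·a)‖ = p^{1 − r₀/2}·‖L − H‖·‖h‖. -/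
/-- The ultrametric inequality for a difference. -/
theorem norm_sub_le_max_norm {K : Type*} [NormedField K] [IsUltrametricDist K] (x y : K) :
    ‖x - y‖ ≤ max ‖x‖ ‖y‖ := by
  simpa [sub_eq_add_neg] using IsUltrametricDist.norm_add_le_max x (-y)

/-- In an ultrametric normed field, adding a strictly smaller element does not change the norm. -/
theorem norm_add_eq_left_of_norm_lt {K : Type*} [NormedField K] [IsUltrametricDist K]
    {x y : K} (hxy : ‖y‖ < ‖x‖) : ‖x + y‖ = ‖x‖ := by
  rw [IsUltrametricDist.norm_add_eq_max_of_norm_ne_norm hxy.ne', max_eq_left hxy.le]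

/-- A square root of `c ^ n` has norm `‖c‖ ^ (n / 2)`. -/
theorem norm_eq_rpow_half_of_sq_eq_pow {K : Type*} [NormedField K] {s c : K} {n : ℕ}
    (hs : s ^ 2 = c ^ n) : ‖s‖ = ‖c‖ ^ ((n : ℝ) / 2) := by
  have hsq : ‖s‖ ^ 2 = ‖c‖ ^ n := by rw [← norm_pow, hs, norm_pow]
  rw [← Real.sqrt_sq (norm_nonneg s), hsq, Real.sqrt_eq_rpow, ← Real.rpow_natCast,
    ← Real.rpow_mul (norm_nonneg c), mul_one_div]

/-- First-order expansion of `(1 + (L / 2) h + e₁)² - (1 + H h + e₂)` in norm, together with the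
fact that `1 + (L / 2) h + e₁` is a unit of norm one. -/
theorem norm_one_add_half_mul_add {K : Type*} [NormedField K] [IsUltrametricDist K]
    (h2 : ‖(2 : K)‖ = 1) {L H h e₁ e₂ : K} (hh : h ≠ 0) (hH : ‖H‖ ≤ 1)
    (he₁ : ‖e₁‖ ≤ ‖h‖ ^ 2) (he₂ : ‖e₂‖ ≤ ‖h‖ ^ 2)
    (hsmall : (max 1 ‖L‖) ^ 2 * ‖h‖ < ‖L - H‖) :
    ‖1 + L / 2 * h + e₁‖ = 1 ∧
      ‖(1 + L / 2 * h + e₁) ^ 2 - (1 + H * h + e₂)‖ = ‖L - H‖ * ‖h‖ := by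
  have hLH : ‖L - H‖ ≤ max 1 ‖L‖ :=
    (norm_sub_le_max_norm L H).trans
      (max_le (le_max_right _ _) (hH.trans (le_max_left _ _)))
  have hL : ‖L‖ ≤ max 1 ‖L‖ := le_max_right _ _
  have hM : 1 ≤ max 1 ‖L‖ := le_max_left _ _
  generalize max 1 ‖L‖ = M at *
  have hpos : 0 < ‖h‖ := norm_pos_iff.mpr hh
  have hMh : M * ‖h‖ < 1 := by nlinarith
  have hh1 : ‖h‖ < 1 := by nlinarith
  have hhM : ‖h‖ ^ 2 ≤ M * ‖h‖ := by nlinarith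
  have hhM2 : ‖h‖ ^ 2 ≤ M ^ 2 * ‖h‖ ^ 2 := le_mul_of_one_le_left (by positivity) (one_le_pow₀ hM)
  have hx : ‖L / 2 * h + e₁‖ ≤ M * ‖h‖ := by
    refine (IsUltrametricDist.norm_add_le_max _ _).trans (max_le ?_ (he₁.trans hhM))
    rw [norm_mul, norm_div, h2, div_one]
    gcongr
  have h20 : (2 : K) ≠ 0 := norm_ne_zero_iff.mp (by rw [h2]; exact one_ne_zero)
  constructor
  · rw [add_assoc, norm_add_eq_left_of_norm_lt, norm_one]
    rw [norm_one]
    exact hx.trans_lt hMh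
  · have herr : ‖(2 * e₁ - e₂) + (L / 2 * h + e₁) ^ 2‖ ≤ M ^ 2 * ‖h‖ ^ 2 := by
      refine (IsUltrametricDist.norm_add_le_max _ _).trans (max_le ?_ ?_)
      · refine (norm_sub_le_max_norm _ _).trans (max_le ?_ (he₂.trans hhM2))
        rw [norm_mul, h2, one_mul]
        exact he₁.trans hhM2
      · rw [norm_pow, ← mul_pow]
        gcongr
    have hexp : (1 + L / 2 * h + e₁) ^ 2 - (1 + H * h + e₂) =
        (L - H) * h + ((2 * e₁ - e₂) + (L / 2 * h + e₁) ^ 2) := by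
      field_simp
      ring
    rw [hexp, norm_add_eq_left_of_norm_lt, norm_mul]
    rw [norm_mul]
    nlinarith

/-- The key valuation computation (generic case): let `p` be an odd prime and `K` a
characteristic-zero field with a multiplicative nonarchimedean norm restricting to the
`p`-adic absolute value on `ℚ`. Let `r₀ ≥ 1`, `s² = p^{r₀}`, and let `L, H, h, e₁, e₂ ∈ K`
with `h ≠ 0`, `L ≠ H`, `‖H‖ ≤ 1`, `‖e₁‖ ≤ ‖h‖²`, `‖e₂‖ ≤ ‖h‖²` and
`max(1,‖L‖)²·‖h‖ < ‖L − H‖`. For `a = s(1 + (L/2)h + e₁)` and `B = 1 + Hh + e₂`, one has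
`‖(a² − B·p^{r₀})/(p·a)‖ = p^{1 − r₀/2}·‖L − H‖·‖h‖`. -/
theorem zigzag_stmt_9 (p : ℕ) (hp : p.Prime) (hodd : Odd p)
    {K : Type*} [NormedField K] [CharZero K] [IsUltrametricDist K]
    (hcompat : ∀ q : ℚ, ‖(q : K)‖ = ((padicNorm p q : ℚ) : ℝ))
    (r₀ : ℕ) (hr₀ : 1 ≤ r₀) (s : K) (hs : s ^ 2 = (p : K) ^ r₀)
    (L H h e₁ e₂ : K) (hh : h ≠ 0) (hLH : L ≠ H) (hH : ‖H‖ ≤ 1)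
    (he₁ : ‖e₁‖ ≤ ‖h‖ ^ 2) (he₂ : ‖e₂‖ ≤ ‖h‖ ^ 2)
    (hsmall : (max 1 ‖L‖) ^ 2 * ‖h‖ < ‖L - H‖)
    (a B : K) (ha : a = s * (1 + (L / 2) * h + e₁)) (hB : B = 1 + H * h + e₂) :
    ‖(a ^ 2 - B * (p : K) ^ r₀) / ((p : K) * a)‖ =
      (p : ℝ) ^ ((1 : ℝ) - (r₀ : ℝ) / 2) * ‖L - H‖ * ‖h‖ := by
  have hpp : Fact p.Prime := ⟨hp⟩
  have h2 : ‖(2 : K)‖ = 1 := by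
    have hnd : ¬ p ∣ 2 := fun hdvd => by
      rw [(Nat.prime_dvd_prime_iff_eq hp Nat.prime_two).mp hdvd] at hodd
      exact absurd hodd (by decide)
    have h := hcompat ((2 : ℕ) : ℚ)
    rw [padicNorm.nat_eq_one_iff 2 |>.mpr hnd] at h
    simpa using h
  have hnp : ‖(p : K)‖ = (p : ℝ)⁻¹ := by
    simpa [padicNorm.padicNorm_p_of_prime] using hcompat p
  have hp0 : (0 : ℝ) < p := by exact_mod_cast hp.pos
  have hs0 : s ≠ 0 := by
    rintro rfl
    have : (p : K) ^ r₀ ≠ 0 := pow_ne_zero _ (by exact_mod_cast hp.ne_zero)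
    exact this (by rw [← hs]; simp)
  obtain ⟨hu, hdiff⟩ := norm_one_add_half_mul_add h2 hh hH he₁ he₂ hsmall
  have hnum : a ^ 2 - B * (p : K) ^ r₀ =
      s ^ 2 * ((1 + L / 2 * h + e₁) ^ 2 - (1 + H * h + e₂)) := by
    rw [ha, hB, ← hs]
    ring
  have hns : ‖s‖ = (p : ℝ) ^ (-((r₀ : ℝ) / 2)) := by
    rw [norm_eq_rpow_half_of_sq_eq_pow hs, hnp, Real.inv_rpow hp0.le, Real.rpow_neg hp0.le]
  have hns0 : ‖s‖ ≠ 0 := norm_ne_zero_iff.mpr hs0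
  rw [hnum, norm_div, norm_mul, hdiff, norm_mul, ha, norm_mul, hu, hnp, norm_pow,
    sub_eq_add_neg (1 : ℝ), Real.rpow_add hp0, Real.rpow_one, ← hns]
  field_simp
end

section
/- Let p ≥ 5 be a prime and let k₀ be an integer with 3 ≤ k₀ ≤ p+1; set r₀ = k₀ − 2, let v₋ be the largest integer with v₋ < r₀/2 and v₊ the smallest integer with v₊ > r₀/2, and write H₋ = H_{v₋}, H₊ = H_{v₊}. Let K be a characteristic-zero field with a multiplicative nonarchimedean norm ‖·‖ such that ‖q‖ equals the p-adic absolute value of q for every rational number q (viewed in K), and let s ∈ K satisfy s² = p^{r₀}. Let k be an integer with k > k₀ and k ≡ k₀ mod (p−1), set r = k − 2 and t = v_p(k − k₀). Let L, e ∈ K satisfy ‖e‖ ≤ p^{−2t}, L ≠ H₋ + H₊ (as elements of K) and max(1, ‖L‖)²·p^{−t} < ‖L − H₋ − H₊‖, and set a = s·(1 + (L/2)·(k − k₀) + e). Then, for c = (a² − C(r−v₋, v₊)·C(r−v₊, v₋)·p^{r₀})/(p·a) with C(·,·) the usual binomial coefficients, one has ‖c‖ = p^{1 − r₀/2}·‖L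 − H₋ − H₊‖·p^{−t}; equivalently, the valuation τ of c equals r₀/2 − 1 + ν + t, where ν is the valuation of L − H₋ − H₊. -/
open Finset in
/-- Second-order expansion of `C(n + v, v) = ∏_{i ≤ v} (1 + n / i)` when `1, …, v` are units. -/
lemma choose_add_eq_one_add_harmonic {K : Type*} [NormedField K] [CharZero K]
    [IsUltrametricDist K] (n v : ℕ) (hv : ∀ i ∈ Icc 1 v, ‖(i : K)‖ = 1) :
    ‖∑ i ∈ Icc 1 v, 1 / (i : K)‖ ≤ 1 ∧ ∃ z : K, ‖z‖ ≤ 1 ∧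
      ((n + v).choose v : K) = 1 + n * (∑ i ∈ Icc 1 v, 1 / (i : K)) + n ^ 2 * z := by
  have hn : ‖(n : K)‖ ≤ 1 := IsUltrametricDist.norm_natCast_le_one K n
  have add_le {x y : K} (hx : ‖x‖ ≤ 1) (hy : ‖y‖ ≤ 1) : ‖x + y‖ ≤ 1 :=
    (IsUltrametricDist.norm_add_le_max x y).trans (max_le hx hy)
  have mul_le {x y : K} (hx : ‖x‖ ≤ 1) (hy : ‖y‖ ≤ 1) : ‖x * y‖ ≤ 1 := by
    rw [norm_mul]; exact mul_le_one₀ hx (norm_nonneg _) hy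
  induction v with
  | zero => exact ⟨by simp, 0, by simp, by simp⟩
  | succ v ih =>
    obtain ⟨hH, z, hz, hc⟩ := ih fun i hi => hv i (Icc_subset_Icc_right (Nat.le_succ v) hi)
    have hu : ‖1 / ((v + 1 : ℕ) : K)‖ ≤ 1 := by
      rw [norm_div, norm_one, hv (v + 1) (by simp), div_one]
    have h0 : ((v : K) + 1) ≠ 0 := by exact_mod_cast Nat.succ_ne_zero v
    rw [sum_Icc_succ_top (by omega)]
    refine ⟨add_le hH hu, z + z * n * (1 / ((v + 1 : ℕ) : K)) +
      (∑ i ∈ Icc 1 v, 1 / (i : K)) * (1 / ((v + 1 : ℕ) : K)),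
      add_le (add_le hz (mul_le (mul_le hz hn) hu)) (mul_le hH hu), ?_⟩
    have hrec : ((n : K) + v + 1) * ((n + v).choose v : K)
        = ((n + (v + 1)).choose (v + 1) : K) * (v + 1) := by
      exact_mod_cast Nat.add_one_mul_choose_eq (n + v) v
    rw [hc] at hrec
    rw [eq_div_of_mul_eq h0 hrec.symm]
    push_cast
    field_simp
    ring

/-- The paper's key computation of the zig-zag parameter `τ = v(c)`: let `p ≥ 5` be prime,
`3 ≤ k₀ ≤ p+1`, `r₀ = k₀ − 2`, let `v₋` (`vminus`) be the largest integer `< r₀/2` and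
`v₊` (`vplus`) the smallest integer `> r₀/2`, with partial harmonic sums `H₋, H₊`. Let `K`
be a characteristic-zero field with a multiplicative nonarchimedean norm restricting to
the `p`-adic absolute value on `ℚ`, and `s ∈ K` with `s² = p^{r₀}`. Let `k > k₀` with
`k ≡ k₀ mod (p−1)`, `r = k − 2`, `t = v_p(k − k₀)`. Let `L, e ∈ K` with `‖e‖ ≤ p^{−2t}`,
`L ≠ H₋ + H₊` and `max(1,‖L‖)²·p^{−t} < ‖L − H₋ − H₊‖`, and set
`a = s(1 + (L/2)(k − k₀) + e)`. Then for
`c = (a² − C(r−v₋,v₊)·C(r−v₊,v₋)·p^{r₀})/(p·a)` one has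
`‖c‖ = p^{1 − r₀/2}·‖L − H₋ − H₊‖·p^{−t}`, i.e. `τ = r₀/2 − 1 + ν + t`. -/
theorem zigzag_stmt_10 (p : ℕ) (hp : p.Prime) (hp5 : 5 ≤ p)
    (k₀ : ℤ) (hk₀ : 3 ≤ k₀) (hk₀' : k₀ ≤ (p : ℤ) + 1)
    (r₀ : ℤ) (hr₀ : r₀ = k₀ - 2)
    (vminus vplus : ℕ)
    (hvminus : 2 * (vminus : ℤ) < r₀ ∧ r₀ ≤ 2 * (vminus : ℤ) + 2)
    (hvplus : r₀ < 2 * (vplus : ℤ) ∧ 2 * (vplus : ℤ) ≤ r₀ + 2)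
    (Hminus Hplus : ℚ)
    (hHminus : Hminus = ∑ i ∈ Finset.Icc 1 vminus, (1 / (i : ℚ)))
    (hHplus : Hplus = ∑ i ∈ Finset.Icc 1 vplus, (1 / (i : ℚ)))
    {K : Type*} [NormedField K] [CharZero K] [IsUltrametricDist K]
    (hcompat : ∀ q : ℚ, ‖(q : K)‖ = ((padicNorm p q : ℚ) : ℝ))
    (s : K) (hs : s ^ 2 = (p : K) ^ r₀)
    (k : ℤ) (hk : k₀ < k) (hcong : k ≡ k₀ [ZMOD ((p : ℤ) - 1)])
    (r : ℤ) (hr : r = k - 2)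
    (t : ℕ) (ht : t = padicValInt p (k - k₀))
    (L e : K)
    (he : ‖e‖ ≤ (p : ℝ) ^ (-(2 * t : ℤ)))
    (hLH : L ≠ ((Hminus + Hplus : ℚ) : K))
    (hsmall : (max 1 ‖L‖) ^ 2 * (p : ℝ) ^ (-(t : ℤ)) < ‖L - ((Hminus + Hplus : ℚ) : K)‖)
    (a c : K)
    (ha : a = s * (1 + (L / 2) * ((k - k₀ : ℤ) : K) + e))
    (hc : c = (a ^ 2 -
        (((r - (vminus : ℤ)).toNat.choose vplus : K) *
          ((r - (vplus : ℤ)).toNat.choose vminus : K)) * (p : K) ^ r₀) / ((p : K) * a)) :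
    ‖c‖ = (p : ℝ) ^ ((1 : ℝ) - (r₀ : ℝ) / 2) * ‖L - ((Hminus + Hplus : ℚ) : K)‖ *
      (p : ℝ) ^ (-(t : ℤ)) := by
  have : Fact p.Prime := ⟨hp⟩
  obtain ⟨n, hn⟩ : ∃ n : ℕ, k - k₀ = n := ⟨(k - k₀).toNat, by omega⟩
  have hn0 : n ≠ 0 := by omega
  have hsum : (vminus : ℤ) + vplus = r₀ := by omega
  have hplus : (r - (vminus : ℤ)).toNat = n + vplus := by omega
  have hminus : (r - (vplus : ℤ)).toNat = n + vminus := by omega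
  have hp1 : (1 : ℝ) < p := by exact_mod_cast hp.one_lt
  have hp0 : (0 : ℝ) < p := by positivity
  have hunit (i : ℕ) (h1 : 1 ≤ i) (h2 : i < p) : ‖(i : K)‖ = 1 := by
    have h := hcompat i
    rw [Rat.cast_natCast] at h
    rw [h, (padicNorm.nat_eq_one_iff i).mpr (Nat.not_dvd_of_pos_of_lt h1 h2), Rat.cast_one]
  have hpK : ‖(p : K)‖ = (p : ℝ)⁻¹ := by
    have h := hcompat p
    rw [Rat.cast_natCast] at h
    rw [h, padicNorm.padicNorm_p_of_prime]
    simp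
  obtain ⟨q, hq⟩ : ∃ q : ℝ, q = (p : ℝ) ^ (-(t : ℤ)) := ⟨_, rfl⟩
  have hq0 : 0 < q := by rw [hq]; positivity
  have hnq : ‖(n : K)‖ = q := by
    have h := hcompat n
    rw [Rat.cast_natCast] at h
    rw [h, hq, ht, hn, padicNorm.eq_zpow_of_nonzero (by exact_mod_cast hn0)]
    simp
  have hq1 : q ≤ 1 := hnq ▸ IsUltrametricDist.norm_natCast_le_one K n
  have he' : ‖e‖ ≤ q ^ 2 := by
    rw [hq, ← zpow_natCast, ← zpow_mul]
    convert he using 2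
    push_cast
    ring
  obtain ⟨hHp, x, hx, hcx⟩ := choose_add_eq_one_add_harmonic (K := K) n vplus
    fun i hi => by rw [Finset.mem_Icc] at hi; exact hunit i hi.1 (by omega)
  obtain ⟨hHm, y, hy, hcy⟩ := choose_add_eq_one_add_harmonic (K := K) n vminus
    fun i hi => by rw [Finset.mem_Icc] at hi; exact hunit i hi.1 (by omega)
  have hHp' : (Hplus : K) = ∑ i ∈ Finset.Icc 1 vplus, 1 / (i : K) := by
    rw [hHplus]; push_cast; rfl
  have hHm' : (Hminus : K) = ∑ i ∈ Finset.Icc 1 vminus, 1 / (i : K) := by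
    rw [hHminus]; push_cast; rfl
  rw [← hHp'] at hHp hcx
  rw [← hHm'] at hHm hcy
  rw [hplus, hminus, hcx, hcy] at hc
  rw [hn] at ha
  rw [Int.cast_natCast] at ha
  rw [← hq] at hsmall ⊢
  rw [Rat.cast_add] at hsmall ⊢
  generalize (Hplus : K) = P at *
  generalize (Hminus : K) = Q at *
  obtain ⟨M, hM⟩ : ∃ M, M = max 1 ‖L‖ := ⟨_, rfl⟩
  have hM1 : 1 ≤ M := hM ▸ le_max_left _ _
  have hLM : ‖L‖ ≤ M := hM ▸ le_max_right _ _
  rw [← hM] at hsmall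
  have add_le {x y : K} {b : ℝ} (hx : ‖x‖ ≤ b) (hy : ‖y‖ ≤ b) : ‖x + y‖ ≤ b :=
    (IsUltrametricDist.norm_add_le_max x y).trans (max_le hx hy)
  have sub_le {x y : K} {b : ℝ} (hx : ‖x‖ ≤ b) (hy : ‖y‖ ≤ b) : ‖x - y‖ ≤ b :=
    sub_eq_add_neg x y ▸ add_le hx ((norm_neg y).trans_le hy)
  have mul_le {x y : K} (hx : ‖x‖ ≤ 1) (hy : ‖y‖ ≤ 1) : ‖x * y‖ ≤ 1 := by
    rw [norm_mul]; exact mul_le_one₀ hx (norm_nonneg _) hy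
  have hLHM : ‖L - (Q + P)‖ ≤ M := sub_le hLM (add_le (hHm.trans hM1) (hHp.trans hM1))
  have hMq : M * q < 1 := by
    have : M * (M * q) < M * 1 := by nlinarith
    exact lt_of_mul_lt_mul_left this (by linarith)
  have hq1' : q < 1 := by nlinarith
  have h2 : ‖(2 : K)‖ = 1 := by exact_mod_cast hunit 2 (by norm_num) (by omega)
  have hLn : ‖L / 2 * n‖ ≤ M * q := by
    rw [norm_mul, norm_div, h2, div_one, hnq]
    gcongr
  have hu : ‖1 + L / 2 * n + e‖ = 1 := by
    have hlt : ‖L / 2 * n + e‖ < ‖(1 : K)‖ := by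
      rw [norm_one]
      exact (IsUltrametricDist.norm_add_le_max _ _).trans_lt
        (max_lt (by linarith) (by nlinarith))
    rw [add_assoc, IsUltrametricDist.norm_add_eq_max_of_norm_ne_norm hlt.ne', max_eq_left hlt.le,
      norm_one]
  have hMq2 : q ^ 2 ≤ (M * q) ^ 2 := by
    gcongr
    nlinarith
  obtain ⟨R, hR⟩ : ∃ R : K, R = (L / 2 * n) ^ 2 + e * (2 + 2 * (L / 2 * n) + e) -
      n ^ 2 * (x + y + P * Q + n * (P * y + Q * x) + n ^ 2 * (x * y)) := ⟨_, rfl⟩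
  have hRle : ‖R‖ ≤ (M * q) ^ 2 := by
    have hn1 : ‖(n : K)‖ ≤ 1 := hnq.trans_le hq1
    have hLn1 : ‖L / 2 * n‖ ≤ 1 := hLn.trans hMq.le
    have he1 : ‖e‖ ≤ 1 := by nlinarith
    rw [hR]
    refine sub_le (add_le ?_ ?_) ?_
    · rw [norm_pow]; gcongr
    · rw [norm_mul]
      refine (mul_le_of_le_one_right (norm_nonneg _) ?_).trans (he'.trans hMq2)
      exact add_le (add_le h2.le (mul_le h2.le hLn1)) he1
    · rw [norm_mul, norm_pow, hnq]
      refine (mul_le_of_le_one_right (by positivity) ?_).trans hMq2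
      refine add_le (add_le (add_le (add_le hx hy) (mul_le hHp hHm))
        (mul_le hn1 (add_le (mul_le hHp hy) (mul_le hHm hx)))) (mul_le ?_ (mul_le hx hy))
      rw [sq]
      exact mul_le hn1 hn1
  have hmain : ‖n * (L - (Q + P)) + R‖ = q * ‖L - (Q + P)‖ := by
    have hlt : ‖R‖ < ‖n * (L - (Q + P))‖ := by
      rw [norm_mul, hnq]
      nlinarith
    rw [IsUltrametricDist.norm_add_eq_max_of_norm_ne_norm hlt.ne', max_eq_left hlt.le, norm_mul,
      hnq]
  have hs0 : s ≠ 0 := by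
    rintro rfl
    have : (p : K) ^ r₀ ≠ 0 := zpow_ne_zero _ (by exact_mod_cast hp.ne_zero)
    exact this (by rw [← hs]; simp)
  have hsn : ‖s‖ = (p : ℝ) ^ (-((r₀ : ℝ) / 2)) := by
    have h : ‖s‖ ^ 2 = ((p : ℝ) ^ (-((r₀ : ℝ) / 2))) ^ 2 := by
      rw [← norm_pow, hs, norm_zpow, hpK, ← Real.rpow_natCast, ← Real.rpow_mul hp0.le,
        inv_zpow', ← Real.rpow_intCast]
      congr 1
      push_cast
      ring
    exact (pow_left_inj₀ (norm_nonneg _) (by positivity) two_ne_zero).mp h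
  have hnum : c = s * (n * (L - (Q + P)) + R) / (p * (1 + L / 2 * n + e)) := by
    have hpK0 : (p : K) ≠ 0 := by exact_mod_cast hp.ne_zero
    have hu0 : 1 + L / 2 * n + e ≠ 0 := norm_ne_zero_iff.mp (by rw [hu]; exact one_ne_zero)
    rw [hc, ← hs, ha, hR, div_eq_div_iff (by positivity) (by positivity)]
    ring
  rw [hnum, norm_div, norm_mul, norm_mul, hmain, hu, hpK, hsn, sub_eq_add_neg (1 : ℝ),
    Real.rpow_add hp0, Real.rpow_one]
  field_simp
end

section
/- Let p be an odd prime and let K be a characteristic-zero field with a multiplicative nonarchimedean norm ‖·‖ such that ‖q‖ equals the p-adic absolute value of q for every rational number q (viewed in K). Let r₀ ≥ 1 be an integer and let s ∈ K satisfy s² = p^{r₀}. Let L, h, e₁, e₂ ∈ K with ‖e₁‖ ≤ ‖h‖², ‖e₂‖ ≤ ‖h‖², and max(1, ‖L‖)·‖h‖ < 1. Set a = s·(1 + (L/2)·h + e₁) and B = 1 + L·h + e₂. Then ‖(a² − B·p^{r₀})/(p·a)‖ ≤ p^{1 − r₀/2}·max(1, ‖L‖)²·‖h‖². -/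
open IsUltrametricDist in
/-- In an ultrametric field, the square of `1 + x + e₁` agrees with `1 + 2 x + e₂` up to an error
of the size of `x ^ 2`, `e₁` and `e₂`. -/
theorem norm_one_add_add_sq_sub_le {K : Type*} [NormedField K] [IsUltrametricDist K]
    {x e₁ e₂ : K} {C : ℝ} (hx : ‖x‖ ≤ 1) (he : ‖e₁‖ ≤ 1) (hxC : ‖x‖ ^ 2 ≤ C) (he₁ : ‖e₁‖ ≤ C)
    (he₂ : ‖e₂‖ ≤ C) : ‖(1 + x + e₁) ^ 2 - (1 + 2 * x + e₂)‖ ≤ C := by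
  have add_le {y z : K} {D : ℝ} (hy : ‖y‖ ≤ D) (hz : ‖z‖ ≤ D) : ‖y + z‖ ≤ D :=
    (norm_add_le_max y z).trans (max_le hy hz)
  have h1x : ‖1 + x‖ ≤ 1 := add_le norm_one.le hx
  have hfactor : ‖(1 + x) + (1 + x + e₁)‖ ≤ 1 := add_le h1x (add_le h1x he)
  have key : (1 + x + e₁) ^ 2 - (1 + 2 * x + e₂) =
      x ^ 2 + e₁ * ((1 + x) + (1 + x + e₁)) + -e₂ := by ring
  rw [key]
  refine add_le (add_le (by rwa [norm_pow]) ?_) (by rwa [norm_neg])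
  rw [norm_mul]
  exact (mul_le_of_le_one_right (norm_nonneg _) hfactor).trans he₁

/-- A square root of `p ^ r` has norm `p ^ (-r / 2)` when `‖p‖ = p⁻¹`. -/
theorem norm_eq_rpow_of_sq_eq_pow {K : Type*} [NormedField K] {p : ℕ} (hp : ‖(p : K)‖ = (p : ℝ)⁻¹)
    {r : ℕ} {s : K} (hs : s ^ 2 = (p : K) ^ r) : ‖s‖ = (p : ℝ) ^ (-((r : ℝ) / 2)) := by
  have hp0 : (0 : ℝ) ≤ p := p.cast_nonneg
  refine (sq_eq_sq₀ (norm_nonneg s) (Real.rpow_nonneg hp0 _)).1 ?_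
  rw [← norm_pow, hs, norm_pow, hp, ← Real.rpow_mul_natCast hp0, inv_pow, ← Real.rpow_natCast,
    ← Real.rpow_neg hp0]
  congr 1
  push_cast
  ring

/-- The degenerate case `L = H₋ + H₊` (`ν = ∞`) of the zig-zag parameter computation:
let `p` be an odd prime and `K` a characteristic-zero field with a multiplicative
nonarchimedean norm restricting to the `p`-adic absolute value on `ℚ`. Let `r₀ ≥ 1`,
`s² = p^{r₀}`, and let `L, h, e₁, e₂ ∈ K` with `‖e₁‖ ≤ ‖h‖²`, `‖e₂‖ ≤ ‖h‖²` and
`max(1,‖L‖)·‖h‖ < 1`. For `a = s(1 + (L/2)h + e₁)` and `B = 1 + Lh + e₂`, one has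
`‖(a² − B·p^{r₀})/(p·a)‖ ≤ p^{1 − r₀/2}·max(1,‖L‖)²·‖h‖²`. -/
theorem zigzag_stmt_11 (p : ℕ) (hp : p.Prime) (hodd : Odd p)
    {K : Type*} [NormedField K] [CharZero K] [IsUltrametricDist K]
    (hcompat : ∀ q : ℚ, ‖(q : K)‖ = ((padicNorm p q : ℚ) : ℝ))
    (r₀ : ℕ) (hr₀ : 1 ≤ r₀) (s : K) (hs : s ^ 2 = (p : K) ^ r₀)
    (L h e₁ e₂ : K)
    (he₁ : ‖e₁‖ ≤ ‖h‖ ^ 2) (he₂ : ‖e₂‖ ≤ ‖h‖ ^ 2)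
    (hsmall : max 1 ‖L‖ * ‖h‖ < 1)
    (a B : K) (ha : a = s * (1 + (L / 2) * h + e₁)) (hB : B = 1 + L * h + e₂) :
    ‖(a ^ 2 - B * (p : K) ^ r₀) / ((p : K) * a)‖ ≤
      (p : ℝ) ^ ((1 : ℝ) - (r₀ : ℝ) / 2) * (max 1 ‖L‖) ^ 2 * ‖h‖ ^ 2 := by
  have : Fact p.Prime := ⟨hp⟩
  have hp0 : (0 : ℝ) < p := by exact_mod_cast hp.pos
  have hpK : (p : K) ≠ 0 := by exact_mod_cast hp.ne_zero
  have hnp : ‖(p : K)‖ = (p : ℝ)⁻¹ := by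
    simpa [padicNorm.padicNorm_p_of_prime] using hcompat p
  have hn2 : ‖(2 : K)‖ = 1 := by
    have hnd : ¬ p ∣ 2 := fun hdvd => by
      rw [(Nat.prime_dvd_prime_iff_eq hp Nat.prime_two).1 hdvd] at hodd
      exact absurd hodd (by decide)
    have h2 := hcompat ((2 : ℕ) : ℚ)
    rw [(padicNorm.nat_eq_one_iff 2).2 hnd] at h2
    simpa using h2
  have hs0 : s ≠ 0 := fun hs' => pow_ne_zero r₀ hpK (by rw [← hs, hs', zero_pow two_ne_zero])
  set M : ℝ := max 1 ‖L‖
  have hM1 : 1 ≤ M := le_max_left _ _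
  have hh : ‖h‖ ≤ M * ‖h‖ := le_mul_of_one_le_left (norm_nonneg h) hM1
  have hsq : ‖h‖ ^ 2 ≤ (M * ‖h‖) ^ 2 := by gcongr
  set x : K := L / 2 * h with hx
  have hxM : ‖x‖ ≤ M * ‖h‖ := by
    rw [hx, norm_mul, norm_div, hn2, div_one]
    gcongr
    exact le_max_right _ _
  have he₁1 : ‖e₁‖ < 1 :=
    he₁.trans_lt (pow_lt_one₀ (norm_nonneg h) (hh.trans_lt hsmall) two_ne_zero)
  have hu : ‖1 + x + e₁‖ = 1 := by
    have hlt : ‖x + e₁‖ < ‖(1 : K)‖ := by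
      rw [norm_one]
      exact (IsUltrametricDist.norm_add_le_max x e₁).trans_lt
        (max_lt (hxM.trans_lt hsmall) he₁1)
    rw [add_assoc, IsUltrametricDist.norm_add_eq_max_of_norm_ne_norm hlt.ne', max_eq_left hlt.le,
      norm_one]
  have hu0 : 1 + x + e₁ ≠ 0 := norm_ne_zero_iff.1 (by rw [hu]; exact one_ne_zero)
  have hB' : B = 1 + 2 * x + e₂ := by
    rw [hB, hx]
    ring
  have herr : ‖(1 + x + e₁) ^ 2 - (1 + 2 * x + e₂)‖ ≤ (M * ‖h‖) ^ 2 :=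
    norm_one_add_add_sq_sub_le (hxM.trans hsmall.le) he₁1.le (by gcongr) (he₁.trans hsq)
      (he₂.trans hsq)
  have hquot : (a ^ 2 - B * (p : K) ^ r₀) / ((p : K) * a) =
      s * ((1 + x + e₁) ^ 2 - (1 + 2 * x + e₂)) / ((p : K) * (1 + x + e₁)) := by
    rw [← hs, ha, hB']
    field_simp
  rw [hquot, norm_div, norm_mul, norm_mul, hu, mul_one, hnp, div_inv_eq_mul,
    norm_eq_rpow_of_sq_eq_pow hnp hs, sub_eq_add_neg (1 : ℝ), Real.rpow_add hp0, Real.rpow_one,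
    mul_assoc _ (M ^ 2), ← mul_pow]
  calc _ = (p : ℝ) * (p : ℝ) ^ (-((r₀ : ℝ) / 2)) *
        ‖(1 + x + e₁) ^ 2 - (1 + 2 * x + e₂)‖ := by ring
    _ ≤ _ := by gcongr
end
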